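/- arXiv:nlin/0505018 — 3 statements merged into one kernel-verified Lean document; each statement's English description precedes it below -/
import Mathlib

section
/- On ℝⁿ with coordinates c₁,…,cₙ (indices mod n, n ≥ 5), the bivector Q with components Q^{ij} = cᵢcⱼ(cᵢ+cⱼ)(δ_{i+1,j} - δ_{j+1,i}) + cᵢc_{i+1}c_{i+2}δ_{i+2,j} - cᵢc_{i-1}c_{i-2}δ_{i-2,j} satisfies the Jacobi identity, i.e., Q is a Poisson tensor. -/
open scoped BigOperators

/-- Partial derivative of a function on `ℝ^n` in the `i`-th coordinate direction. -/
noncomputable def pderiv {n : ℕ} (i : Fin n) (f : (Fin n → ℝ) → ℝ) (x : Fin n → ℝ) : ℝ :=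
  fderiv ℝ f x (Pi.single i 1)

/-- The Jacobi identity for a bivector field written in coordinates. -/
def JacobiId {n : ℕ} (P : (Fin n → ℝ) → Fin n → Fin n → ℝ) : Prop :=
  ∀ x i j k, ∑ l, (P x l j * pderiv l (fun y => P y i k) x
    + P x l i * pderiv l (fun y => P y k j) x
    + P x l k * pderiv l (fun y => P y j i) x) = 0

/-- Kronecker delta on `Fin n`, valued in `ℝ`. -/
def kdelta {n : ℕ} (i j : Fin n) : ℝ := if i = j then 1 else 0

/-- The quadratic Poisson tensor of the periodic `n`-site Volterra lattice:
`P^{ij} = cᵢ cⱼ (δ_{i+1,j} - δ_{j+1,i})`, indices mod `n`. -/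
def Pvolt {n : ℕ} [NeZero n] (c : Fin n → ℝ) (i j : Fin n) : ℝ :=
  c i * c j * (kdelta (i + 1) j - kdelta (j + 1) i)

/-- The cubic Poisson tensor of the periodic `n`-site Volterra lattice. -/
def Qvolt {n : ℕ} [NeZero n] (c : Fin n → ℝ) (i j : Fin n) : ℝ :=
  c i * c j * (c i + c j) * (kdelta (i + 1) j - kdelta (j + 1) i)
    + c i * c (i + 1) * c (i + 2) * kdelta (i + 2) j
    - c i * c (i - 1) * c (i - 2) * kdelta (i - 2) j

section aux
variable {G : Type*} [CommRing G] [DecidableEq G]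

def dlt (i j : G) : ℝ := if i = j then 1 else 0

def AA (c : G → ℝ) (i j : G) : ℝ :=
  (c i + c j) * (dlt (i + 1) j - dlt (j + 1) i) + c (i + 1) * dlt (i + 2) j
    - c (i - 1) * dlt (i - 2) j

def BB (c : G → ℝ) (i k j : G) : ℝ :=
  (c i * AA c i j + c k * AA c k j) * (dlt (i + 1) k - dlt (k + 1) i)
    + c (i + 1) * AA c (i + 1) j * dlt (i + 2) k - c (i - 1) * AA c (i - 1) j * dlt (i - 2) k

lemma dlt_mul (i j : G) (f : G → ℝ) : dlt i j * f j = dlt i j * f i := by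
  unfold dlt; split_ifs with h
  · rw [h]
  · simp

lemma dlt_congr {i j i' j' : G} (h : i - j = i' - j') : dlt i j = dlt i' j' := by
  unfold dlt; have : i = j ↔ i' = j' := by rw [← sub_eq_zero, h, sub_eq_zero]
  simp only [this]

lemma dlt_congr' {i j i' j' : G} (h : i - j = j' - i') : dlt i j = dlt i' j' := by
  unfold dlt; have : i = j ↔ i' = j' := by rw [← sub_eq_zero, h, sub_eq_zero, eq_comm]
  simp only [this]

lemma AA_antisymm (c : G → ℝ) (i j : G) : AA c i j = - AA c j i := by
  unfold AA
  have h1 := dlt_mul (i + 2) j (fun t => c (t - 1))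
  have h2 := dlt_mul (i - 2) j (fun t => c (t + 1))
  rw [dlt_congr' (i := j + 2) (j := i) (i' := i - 2) (j' := j) (by ring),
    dlt_congr' (i := j - 2) (j := i) (i' := i + 2) (j' := j) (by ring)]
  simp only [show i + 2 - 1 = i + 1 by ring, show i - 2 + 1 = i - 1 by ring] at h1 h2
  linear_combination -h1 + h2

lemma AA_exp (c : G → ℝ) (i j : G) (m : ℤ) : AA c (i + m) j =
    (c (i + m) + c (i + (m + 1 : ℤ))) * dlt (i + (m + 1 : ℤ)) j
    - (c (i + m) + c (i + (m - 1 : ℤ))) * dlt (i + (m - 1 : ℤ)) j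
    + c (i + (m + 1 : ℤ)) * dlt (i + (m + 2 : ℤ)) j
    - c (i + (m - 1 : ℤ)) * dlt (i + (m - 2 : ℤ)) j := by
  unfold AA
  have h1 := dlt_mul (i + m + 1) j c
  have h2 := dlt_mul (i + m - 1) j c
  rw [dlt_congr' (i := j + 1) (j := i + m) (i' := i + m - 1) (j' := j) (by ring)]
  push_cast
  simp only [← add_assoc, ← add_sub_assoc]
  linear_combination h1 - h2

/-- Shifted argument version: `A (k + s) i` against a function of `k`. -/
lemma AA_mul (c : G → ℝ) (i k : G) (s : ℤ) (f : G → ℝ) : AA c (k + s) i * f k =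
    - ((c i + c (i + (1 : ℤ))) * dlt (i + (1 - s : ℤ)) k * f (i + (1 - s : ℤ))
    - (c i + c (i + (-1 : ℤ))) * dlt (i + (-1 - s : ℤ)) k * f (i + (-1 - s : ℤ))
    + c (i + (1 : ℤ)) * dlt (i + (2 - s : ℤ)) k * f (i + (2 - s : ℤ))
    - c (i + (-1 : ℤ)) * dlt (i + (-2 - s : ℤ)) k * f (i + (-2 - s : ℤ))) := by
  have e := AA_exp c i (k + s) 0
  simp only [Int.cast_zero, add_zero, zero_add, zero_sub] at e
  rw [AA_antisymm, e]
  have h (m : ℤ) : dlt (i + m) (k + s) = dlt (i + (m - s : ℤ)) k :=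
    dlt_congr (by push_cast; ring)
  simp only [h]
  have g (m : ℤ) := dlt_mul (i + m) k f
  linear_combination -(c i + c (i + (1 : ℤ))) * g (1 - s) + (c i + c (i + (-1 : ℤ))) * g (-1 - s)
    - c (i + (1 : ℤ)) * g (2 - s) + c (i + (-1 : ℤ)) * g (-2 - s)

lemma BB_cyc (c : G → ℝ) (i j k : G) : BB c i k j + BB c k j i + BB c j i k = 0 := by
  have D (a b : G) : dlt (b + 1) a = dlt (a + (-1 : ℤ)) b := dlt_congr' (by push_cast; ring)
  -- first
  have t1 : BB c i k j =
      dlt (i + (1:ℤ)) k * (c (i + (0:ℤ)) * AA c (i + (0:ℤ)) j + c (i + (1:ℤ)) * AA c (i + (1:ℤ)) j)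
      - dlt (i + (-1:ℤ)) k *
        (c (i + (0:ℤ)) * AA c (i + (0:ℤ)) j + c (i + (-1:ℤ)) * AA c (i + (-1:ℤ)) j)
      + dlt (i + (2:ℤ)) k * (c (i + (1:ℤ)) * AA c (i + (1:ℤ)) j)
      - dlt (i + (-2:ℤ)) k * (c (i + (-1:ℤ)) * AA c (i + (-1:ℤ)) j) := by
    unfold BB
    rw [D i k]
    have h1 := dlt_mul (i + (1:ℤ)) k (fun t => c t * AA c t j)
    have h2 := dlt_mul (i + (-1:ℤ)) k (fun t => c t * AA c t j)
    push_cast at h1 h2 ⊢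
    simp only [add_zero, ← sub_eq_add_neg] at h1 h2 ⊢
    linear_combination h1 - h2
  have t3 : BB c j i k =
      dlt (i + (-1:ℤ)) j *
        (c (i + (-1:ℤ)) * AA c (i + (-1:ℤ)) k + c (i + (0:ℤ)) * AA c (i + (0:ℤ)) k)
      - dlt (i + (1:ℤ)) j *
        (c (i + (1:ℤ)) * AA c (i + (1:ℤ)) k + c (i + (0:ℤ)) * AA c (i + (0:ℤ)) k)
      + dlt (i + (-2:ℤ)) j * (c (i + (-1:ℤ)) * AA c (i + (-1:ℤ)) k)
      - dlt (i + (2:ℤ)) j * (c (i + (1:ℤ)) * AA c (i + (1:ℤ)) k) := by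
    unfold BB
    rw [D i j, dlt_congr' (i := j + 2) (j := i) (i' := i - 2) (j' := j) (by ring),
      dlt_congr' (i := j - 2) (j := i) (i' := i + 2) (j' := j) (by ring)]
    have h1 := dlt_mul (i + (1:ℤ)) j (fun t => c t * AA c t k)
    have h2 := dlt_mul (i + (-1:ℤ)) j (fun t => c t * AA c t k)
    have h3 := dlt_mul (i + (2:ℤ)) j (fun t => c (t - 1) * AA c (t - 1) k)
    have h4 := dlt_mul (i + (-2:ℤ)) j (fun t => c (t + 1) * AA c (t + 1) k)
    push_cast at h1 h2 h3 h4 ⊢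
    simp only [add_zero, ← sub_eq_add_neg, show i + 2 - 1 = i + 1 by ring,
      show i - 2 + 1 = i - 1 by ring] at h1 h2 h3 h4 ⊢
    linear_combination h2 - h1 - h3 + h4
  have t2 : BB c k j i =
      AA c (k + (0:ℤ)) i * (c k * (dlt (k + (1:ℤ)) j - dlt (k + (-1:ℤ)) j))
      + AA c (j + (0:ℤ)) i * (c j * (dlt (j + (-1:ℤ)) k - dlt (j + (1:ℤ)) k))
      + AA c (k + (1:ℤ)) i * (c (k + (1:ℤ)) * dlt (k + (2:ℤ)) j)
      - AA c (k + (-1:ℤ)) i * (c (k + (-1:ℤ)) * dlt (k + (-2:ℤ)) j) := by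
    unfold BB
    have e1 : dlt (k + 1) j = dlt (j + (-1:ℤ)) k := D j k
    have e2 : dlt (j + 1) k = dlt (k + (-1:ℤ)) j := D k j
    push_cast at e1 e2 ⊢
    simp only [add_zero, ← sub_eq_add_neg] at e1 e2 ⊢
    rw [e2, ← e1]
    ring
  rw [AA_mul c i k 0 (fun k => c k * (dlt (k + (1:ℤ)) j - dlt (k + (-1:ℤ)) j)),
    AA_mul c i j 0 (fun j => c j * (dlt (j + (-1:ℤ)) k - dlt (j + (1:ℤ)) k)),
    AA_mul c i k 1 (fun k => c (k + (1:ℤ)) * dlt (k + (2:ℤ)) j),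
    AA_mul c i k (-1) (fun k => c (k + (-1:ℤ)) * dlt (k + (-2:ℤ)) j)] at t2
  simp only [AA_exp] at t1 t3
  simp only [add_assoc, ← Int.cast_add] at t2
  norm_num only [Int.reduceAdd, Int.reduceSub, Int.reduceNeg] at t1 t2 t3
  have z : c i = c (i + (0:ℤ)) := by simp
  rw [t1, t2, t3]
  simp
  ring

end aux

lemma sum_pderiv {n : ℕ} (f : (Fin n → ℝ) → ℝ) (x v : Fin n → ℝ) :
    ∑ l, v l * pderiv l f x = fderiv ℝ f x v := by
  conv_rhs => rw [pi_eq_sum_univ' v]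
  simp [pderiv, map_sum]

open Fin.CommRing in
lemma Qvolt_eq {n : ℕ} [NeZero n] (c : Fin n → ℝ) (i j : Fin n) :
    Qvolt c i j = c i * c j * AA c i j := by
  have h1 := dlt_mul (i + 2) j c
  have h2 := dlt_mul (i - 2) j c
  unfold Qvolt AA
  change _ * (dlt (i+1) j - dlt (j+1) i) + _ * dlt (i+2) j - _ * dlt (i-2) j = _
  linear_combination -c i * c (i + 1) * h1 + c i * c (i - 1) * h2

open Fin.CommRing in
lemma fderiv_Q {n : ℕ} [NeZero n] (x : Fin n → ℝ) (i k j : Fin n) :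
    fderiv ℝ (fun y => Qvolt y i k) x (fun l => Qvolt x l j) =
      x i * x j * x k * (AA x i j * AA x i k + AA x k j * AA x i k + BB x i k j) := by
  have p (a : Fin n) : HasFDerivAt (fun y : Fin n → ℝ => y a)
    (ContinuousLinearMap.proj (R := ℝ) (φ := fun _ : Fin n => ℝ) a) x := hasFDerivAt_apply a x
  simp only [Qvolt_eq]
  have hA := ((((p i).add (p k)).mul_const (dlt (i + 1) k - dlt (k + 1) i)).add
    ((p (i+1)).mul_const (dlt (i + 2) k))).sub ((p (i-1)).mul_const (dlt (i - 2) k))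
  have h := ((p i).mul (p k)).mul hA
  have h' : fderiv ℝ (fun y : Fin n → ℝ => y i * y k * AA y i k) x = _ := h.fderiv
  rw [h']
  simp
  unfold BB
  generalize hh : AA x i k = w
  unfold AA at hh
  rw [← hh]
  ring

/-- The cubic Volterra bivector satisfies the Jacobi identity. -/
theorem stmt7 (n : ℕ) [NeZero n] (hn : 5 ≤ n) : JacobiId (fun c => Qvolt (n := n) c) := by
  intro x i j k
  simp only [Finset.sum_add_distrib]
  rw [sum_pderiv _ x (fun l => Qvolt x l j), sum_pderiv _ x (fun l => Qvolt x l i),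
    sum_pderiv _ x (fun l => Qvolt x l k), fderiv_Q, fderiv_Q, fderiv_Q]
  open Fin.CommRing in
  have h := BB_cyc x i j k
  open Fin.CommRing in
  rw [AA_antisymm x k j, AA_antisymm x k i, AA_antisymm x j i]
  linear_combination x i * x j * x k * h
end

section
/- The quadratic tensor P^{ij} = cᵢcⱼ(δ_{i+1,j} - δ_{j+1,i}) and the cubic tensor Q^{ij} = cᵢcⱼ(cᵢ+cⱼ)(δ_{i+1,j} - δ_{j+1,i}) + cᵢc_{i+1}c_{i+2}δ_{i+2,j} - cᵢc_{i-1}c_{i-2}δ_{i-2,j} on ℝⁿ (indices mod n) are compatible Poisson tensors: Q - νP satisfies the Jacobi identity for every scalar ν. -/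
open scoped BigOperators

section helpers
open Fin.CommRing

/-- Shift of a site by an integer. -/
def vsh {n : ℕ} [NeZero n] (p : Fin n) (s : ℤ) : Fin n := p + (s : Fin n)

lemma vsh_vsh {n : ℕ} [NeZero n] (p : Fin n) (s t : ℤ) : vsh (vsh p s) t = vsh p (s + t) := by
  simp [vsh, add_assoc]

lemma vsh_zero {n : ℕ} [NeZero n] (p : Fin n) : vsh p 0 = p := by simp [vsh]
lemma vsh_one {n : ℕ} [NeZero n] (p : Fin n) : p + 1 = vsh p 1 := by simp [vsh]
lemma vsh_two {n : ℕ} [NeZero n] (p : Fin n) : p + 2 = vsh p 2 := by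
  have h : (2 : Fin n) = ((2 : ℤ) : Fin n) := by norm_num
  rw [h]; rfl
lemma vsh_neg_one {n : ℕ} [NeZero n] (p : Fin n) : p - 1 = vsh p (-1) := by
  simp [vsh, sub_eq_add_neg]
lemma vsh_neg_two {n : ℕ} [NeZero n] (p : Fin n) : p - 2 = vsh p (-2) := by
  have h : -(2 : Fin n) = ((-2 : ℤ) : Fin n) := by norm_num
  rw [sub_eq_add_neg, h]; rfl

end helpers

lemma vsh_eq {n : ℕ} [NeZero n] (p q : Fin n) (s : ℤ) : q = vsh p s ↔ p = vsh q (-s) := by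
  constructor <;> rintro rfl <;> simp [vsh_vsh, vsh_zero]

/-- Coefficients of the pencil. -/
def vA {n : ℕ} [NeZero n] (ν : ℝ) (c : Fin n → ℝ) (s : ℤ) (p : Fin n) : ℝ :=
  if s = 1 then c p * c (vsh p 1) * (c p + c (vsh p 1) - ν)
  else if s = 2 then c p * c (vsh p 1) * c (vsh p 2)
  else if s = -1 then -(c p * c (vsh p (-1)) * (c p + c (vsh p (-1)) - ν))
  else if s = -2 then -(c p * c (vsh p (-1)) * c (vsh p (-2)))
  else 0

/-- Partial derivatives of the coefficients. -/
def vB {n : ℕ} [NeZero n] (ν : ℝ) (c : Fin n → ℝ) (s t : ℤ) (p : Fin n) : ℝ :=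
  if s = 1 then
    (if t = 0 then c (vsh p 1) * (2 * c p + c (vsh p 1) - ν)
     else if t = 1 then c p * (c p + 2 * c (vsh p 1) - ν) else 0)
  else if s = 2 then
    (if t = 0 then c (vsh p 1) * c (vsh p 2)
     else if t = 1 then c p * c (vsh p 2)
     else if t = 2 then c p * c (vsh p 1) else 0)
  else if s = -1 then
    (if t = 0 then -(c (vsh p (-1)) * (2 * c p + c (vsh p (-1)) - ν))
     else if t = -1 then -(c p * (c p + 2 * c (vsh p (-1)) - ν)) else 0)
  else if s = -2 then
    (if t = 0 then -(c (vsh p (-1)) * c (vsh p (-2)))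
     else if t = -1 then -(c p * c (vsh p (-2)))
     else if t = -2 then -(c p * c (vsh p (-1))) else 0)
  else 0

/-- The range of shifts. -/
def vR : Finset ℤ := {-2, -1, 0, 1, 2}

lemma vR_sum (f : ℤ → ℝ) : ∑ s ∈ vR, f s = f (-2) + f (-1) + f 0 + f 1 + f 2 := by
  simp [vR]; ring

lemma vA_repr {n : ℕ} [NeZero n] (ν : ℝ) (c : Fin n → ℝ) (p q : Fin n) :
    Qvolt c p q - ν * Pvolt c p q = ∑ s ∈ vR, kdelta q (vsh p s) * vA ν c s p := by
  have comm : ∀ a b : Fin n, kdelta a b = kdelta b a := by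
    intro a b; unfold kdelta; simp only [eq_comm]
  have e1' : kdelta (p + 1) q = kdelta q (vsh p 1) := by rw [vsh_one, comm]
  have e2 : kdelta (q + 1) p = kdelta q (vsh p (-1)) := by
    rw [vsh_one, comm]; unfold kdelta; simp only [vsh_eq q p 1]
  have e4 : kdelta (p + 2) q = kdelta q (vsh p 2) := by rw [vsh_two, comm]
  have e5 : kdelta (p - 2) q = kdelta q (vsh p (-2)) := by rw [vsh_neg_two, comm]
  have key : ∀ (s : ℤ), kdelta q (vsh p s) * c q = kdelta q (vsh p s) * c (vsh p s) := by
    intro s; unfold kdelta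
    split_ifs with h
    · rw [← h]
    · simp
  have k1 := key 1
  have k2 := key (-1)
  rw [vR_sum]
  unfold Qvolt Pvolt
  rw [e1', e2, e4, e5, vsh_one, vsh_two, vsh_neg_one, vsh_neg_two]
  simp only [vA]
  norm_num
  linear_combination (c p * (c p + c q + c (vsh p 1) - ν)) * k1
    - (c p * (c p + c q + c (vsh p (-1)) - ν)) * k2

lemma vA_deriv {n : ℕ} [NeZero n] (ν : ℝ) (c v : Fin n → ℝ) (s : ℤ) (p : Fin n) :
    DifferentiableAt ℝ (fun y => vA ν y s p) c ∧
    fderiv ℝ (fun y => vA ν y s p) c v = ∑ t ∈ vR, vB ν c s t p * v (vsh p t) := by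
  have hp : ∀ a : Fin n, HasFDerivAt (fun y : Fin n → ℝ => y a)
      (ContinuousLinearMap.proj (R := ℝ) (φ := fun _ : Fin n => ℝ) a) c :=
    fun a => hasFDerivAt_apply a c
  rw [vR_sum]
  unfold vA vB
  by_cases h1 : s = 1
  · subst h1
    have := ((hp p).mul (hp (vsh p 1))).mul (((hp p).add (hp (vsh p 1))).sub_const ν)
    simp only [if_true]
    refine ⟨this.differentiableAt, ?_⟩
    refine (congrArg (fun L => L v) this.fderiv).trans ?_
    simp [vsh_zero]; ring
  by_cases h2 : s = 2
  · subst h2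
    have := ((hp p).mul (hp (vsh p 1))).mul (hp (vsh p 2))
    simp only [if_true, h1, if_false]
    refine ⟨this.differentiableAt, ?_⟩
    refine (congrArg (fun L => L v) this.fderiv).trans ?_
    simp [vsh_zero]; ring
  by_cases h3 : s = -1
  · subst h3
    have := (((hp p).mul (hp (vsh p (-1)))).mul (((hp p).add (hp (vsh p (-1)))).sub_const ν)).neg
    simp only [if_true, h1, h2, if_false]
    refine ⟨this.differentiableAt, ?_⟩
    refine (congrArg (fun L => L v) this.fderiv).trans ?_
    simp [vsh_zero]; ring
  by_cases h4 : s = -2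
  · subst h4
    have := (((hp p).mul (hp (vsh p (-1)))).mul (hp (vsh p (-2)))).neg
    simp only [if_true, h1, h2, h3, if_false]
    refine ⟨this.differentiableAt, ?_⟩
    refine (congrArg (fun L => L v) this.fderiv).trans ?_
    simp [vsh_zero]; ring
  simp [h1, h2, h3, h4]

lemma vT {n : ℕ} [NeZero n] (ν : ℝ) (c : Fin n → ℝ) (p q r : Fin n) :
    ∑ l, (Qvolt c l r - ν * Pvolt c l r) *
      pderiv l (fun y => Qvolt y p q - ν * Pvolt y p q) c =
    ∑ s ∈ vR, ∑ t ∈ vR, ∑ w ∈ vR, kdelta q (vsh p s) * kdelta r (vsh p (t + w)) *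
      (vB ν c s t p * vA ν c w (vsh p t)) := by
  set v : Fin n → ℝ := fun l => Qvolt c l r - ν * Pvolt c l r with hv
  have h1 : ∑ l, v l * pderiv l (fun y => Qvolt y p q - ν * Pvolt y p q) c
      = fderiv ℝ (fun y => Qvolt y p q - ν * Pvolt y p q) c v := by
    conv_rhs => rw [pi_eq_sum_univ' v, map_sum]
    refine Finset.sum_congr rfl fun l _ => ?_
    rw [map_smul, smul_eq_mul]; unfold pderiv
    congr 2
  have h2 : fderiv ℝ (fun y => Qvolt y p q - ν * Pvolt y p q) c v =
      ∑ s ∈ vR, kdelta q (vsh p s) * ∑ t ∈ vR, vB ν c s t p * v (vsh p t) := by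
    have : (fun y : Fin n → ℝ => Qvolt y p q - ν * Pvolt y p q) =
        fun y => ∑ s ∈ vR, kdelta q (vsh p s) * vA ν y s p := by
      funext y; exact vA_repr ν y p q
    rw [this, fderiv_fun_sum (fun s _ => ((vA_deriv ν c v s p).1.const_mul _))]
    rw [ContinuousLinearMap.sum_apply]
    refine Finset.sum_congr rfl fun s _ => ?_
    rw [fderiv_const_mul (vA_deriv ν c v s p).1, ContinuousLinearMap.smul_apply,
      (vA_deriv ν c v s p).2, smul_eq_mul]
  change ∑ l, v l * _ = _
  rw [h1, h2]
  refine Finset.sum_congr rfl fun s _ => ?_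
  rw [Finset.mul_sum]
  refine Finset.sum_congr rfl fun t _ => ?_
  rw [hv]
  simp only [vA_repr]
  rw [Finset.mul_sum, Finset.mul_sum]
  refine Finset.sum_congr rfl fun w _ => ?_
  rw [vsh_vsh]; ring

/-- Indicator of a relative configuration. -/
def vD {n : ℕ} [NeZero n] (i j k : Fin n) (a b : ℤ) : ℝ :=
  kdelta j (vsh i a) * kdelta k (vsh i b)

lemma vswap1 {n : ℕ} [NeZero n] (i j k : Fin n) (s u : ℤ) (F : Fin n → ℝ) :
    kdelta k (vsh i s) * kdelta j (vsh i u) * F i = vD i j k u s * F (vsh i 0) := by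
  unfold vD; rw [vsh_zero]; ring

lemma vswap2 {n : ℕ} [NeZero n] (i j k : Fin n) (s u : ℤ) (F : Fin n → ℝ) :
    kdelta j (vsh k s) * kdelta i (vsh k u) * F k = vD i j k (s - u) (-u) * F (vsh i (-u)) := by
  unfold vD kdelta
  simp only [vsh_eq k i u]
  by_cases h : k = vsh i (-u)
  · subst h; simp [vsh_vsh, neg_add_eq_sub]
  · simp [h]

lemma vswap3 {n : ℕ} [NeZero n] (i j k : Fin n) (s u : ℤ) (F : Fin n → ℝ) :
    kdelta i (vsh j s) * kdelta k (vsh j u) * F j = vD i j k (-s) (u - s) * F (vsh i (-s)) := by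
  unfold vD kdelta
  simp only [vsh_eq j i s]
  by_cases h : j = vsh i (-s)
  · subst h; simp [vsh_vsh, neg_add_eq_sub]
  · simp [h]

set_option maxHeartbeats 4000000 in
set_option maxRecDepth 100000 in
/-- The quadratic and cubic Volterra tensors are compatible: `Q - ν P` satisfies the Jacobi
identity for every scalar `ν`. -/
theorem stmt8 (n : ℕ) [NeZero n] (hn : 5 ≤ n) (ν : ℝ) :
    JacobiId (fun (c : Fin n → ℝ) i j => Qvolt c i j - ν * Pvolt c i j) := by
  intro c i j k
  rw [Finset.sum_add_distrib, Finset.sum_add_distrib, vT, vT, vT]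
  have E1 := fun s t w => vswap1 i j k s (t + w) (fun p => vB ν c s t p * vA ν c w (vsh p t))
  have E2 := fun s t w => vswap2 i j k s (t + w) (fun p => vB ν c s t p * vA ν c w (vsh p t))
  have E3 := fun s t w => vswap3 i j k s (t + w) (fun p => vB ν c s t p * vA ν c w (vsh p t))
  simp only [E1, E2, E3]
  clear E1 E2 E3
  generalize vD i j k = D
  simp only [vR_sum, vA, vB, vsh_vsh]
  norm_num
  ring
end

section
/- For the cubic Volterra Poisson tensor Q on ℝⁿ and the vector field Z₀ = c₁ ∂/∂c₁ + cₙ ∂/∂cₙ, the Lie derivative satisfies L_{Z₀} Q = Z₀ ∧ W₀, where W₀ = c₁cₙ(∂/∂c₁ - ∂/∂cₙ) + c₁c₂ ∂/∂c₂ - c_{n-1}cₙ ∂/∂c_{n-1}. -/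
open scoped BigOperators

/-- The index of `cₙ` (the last coordinate) in `Fin n`. -/
def lastI (n : ℕ) [NeZero n] : Fin n := (0 : Fin n) - 1

/-- The vector field `Z₀ = c₁ ∂/∂c₁ + cₙ ∂/∂cₙ` (components). -/
def Z0 {n : ℕ} [NeZero n] (x : Fin n → ℝ) (i : Fin n) : ℝ :=
  if i = 0 then x i else if i = lastI n then x i else 0

/-- Lie derivative of a bivector field `P` along a vector field `Z`, in coordinates:
`(L_Z P)^{ij} = Σₗ (Zˡ ∂ₗ P^{ij} − P^{lj} ∂ₗ Zⁱ − P^{il} ∂ₗ Zʲ)`. -/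
noncomputable def lieDerivBivector {n : ℕ} (Z : (Fin n → ℝ) → Fin n → ℝ)
    (P : (Fin n → ℝ) → Fin n → Fin n → ℝ) (x : Fin n → ℝ) (i j : Fin n) : ℝ :=
  ∑ l, (Z x l * pderiv l (fun y => P y i j) x
    - P x l j * pderiv l (fun y => Z y i) x
    - P x i l * pderiv l (fun y => Z y j) x)

/-- The vector field `W₀ = c₁cₙ(∂/∂c₁ - ∂/∂cₙ) + c₁c₂ ∂/∂c₂ − c_{n-1}cₙ ∂/∂c_{n-1}`
(components). -/
def W0 {n : ℕ} [NeZero n] (x : Fin n → ℝ) (i : Fin n) : ℝ :=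
  (if i = 0 then x 0 * x (lastI n) else 0)
    + (if i = lastI n then -(x 0 * x (lastI n)) else 0)
    + (if i = 1 then x 0 * x 1 else 0)
    + (if i = lastI n - 1 then -(x (lastI n - 1) * x (lastI n)) else 0)

/-- weight of the coordinate -/
def aW {R : Type*} [CommRing R] [DecidableEq R] (i : R) : ℝ :=
  if i = 0 then 1 else if i = 0 - 1 then 1 else 0

lemma comb_aux {R : Type*} [CommRing R] [DecidableEq R] (h1 : (1:R) ≠ 0) (h2 : (1+1:R) ≠ 0)
    (h3 : (1+1+1:R) ≠ 0) (h4 : (1+1+1+1:R) ≠ 0) (t : R) (ht : t = 1 + 1) (x : R → ℝ) (i j : R) :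
    x i * x j * (aW i * x i + aW j * x j) *
      ((if i + 1 = j then 1 else 0) - (if j + 1 = i then 1 else 0))
    + aW (i+1) * (x i * x (i+1) * x (i+t)) * (if i + t = j then 1 else 0)
    - aW (i-1) * (x i * x (i-1) * x (i-t)) * (if i - t = j then 1 else 0)
    = (aW i * x i) * ((if j = 0 then x 0 * x (0-1) else 0)
    + (if j = 0-1 then -(x 0 * x (0-1)) else 0)
    + (if j = 1 then x 0 * x 1 else 0)
    + (if j = 0-1 - 1 then -(x (0-1 - 1) * x (0-1)) else 0))
    - (aW j * x j) * ((if i = 0 then x 0 * x (0-1) else 0)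
    + (if i = 0-1 then -(x 0 * x (0-1)) else 0)
    + (if i = 1 then x 0 * x 1 else 0)
    + (if i = 0-1 - 1 then -(x (0-1 - 1) * x (0-1)) else 0)) := by
  subst ht
  unfold aW
  by_cases a1 : j = i + 1
  · subst a1
    have q1 : ¬ (i + 1 + 1 = i) := fun h => h2 (by linear_combination h)
    have q2 : ¬ (i + (1 + 1) = i + 1) := fun h => h1 (by linear_combination h)
    have q3 : ¬ (i - (1 + 1) = i + 1) := fun h => h3 (by linear_combination -h)
    simp only [q1, q2, q3, if_true, if_false]
    grind (splits := 20)
  by_cases a2 : i = j + 1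
  · subst a2
    have q1 : ¬ (j + 1 + 1 = j) := fun h => h2 (by linear_combination h)
    have q2 : ¬ (j + 1 + (1 + 1) = j) := fun h => h3 (by linear_combination h)
    have q3 : ¬ (j + 1 - (1 + 1) = j) := fun h => h1 (by linear_combination -h)
    simp only [q1, q2, q3, if_true, if_false]
    grind (splits := 20)
  by_cases a3 : j = i + (1+1)
  · subst a3
    have q1 : ¬ (i + 1 = i + (1 + 1)) := by grind
    have q2 : ¬ (i + (1 + 1) + 1 = i) := by grind
    have q3 : ¬ (i - (1 + 1) = i + (1 + 1)) := fun h => h4 (by linear_combination -h)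
    simp only [q1, q2, q3, if_true, if_false]
    grind (splits := 20)
  by_cases a4 : i = j + (1+1)
  · subst a4
    have q1 : ¬ (j + (1 + 1) + 1 = j) := by grind
    have q2 : ¬ (j + 1 = j + (1 + 1)) := by grind
    have q3 : ¬ (j + (1 + 1) + (1 + 1) = j) := fun h => h4 (by linear_combination h)
    have q4 : j + (1 + 1) - (1 + 1) = j := by grind
    simp only [q1, q2, q3, q4, if_true, if_false]
    grind (splits := 20)
  have q1 : ¬ (i + 1 = j) := by grind
  have q2 : ¬ (j + 1 = i) := by grind
  have q3 : ¬ (i + (1 + 1) = j) := by grind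
  have q4 : ¬ (i - (1 + 1) = j) := by grind
  simp only [q1, q2, q3, q4, if_false]
  grind (splits := 20)

open scoped Fin.CommRing in
theorem lie_aux (n : ℕ) [NeZero n] (hn : 5 ≤ n) (x : Fin n → ℝ) (i j : Fin n) :
    lieDerivBivector Z0 (fun c => Qvolt c) x i j = Z0 x i * W0 x j - Z0 x j * W0 x i := by
  have hZ : ∀ (y : Fin n → ℝ) k, Z0 y k = aW k * y k := by
    intro y k
    unfold Z0 aW lastI
    split_ifs <;> simp
  have hpZ : ∀ k l, pderiv l (fun y : Fin n → ℝ => Z0 y k) x = if l = k then aW k else 0 := by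
    intro k l
    unfold pderiv
    simp only [hZ]
    have : HasFDerivAt (fun y : Fin n → ℝ => aW k * y k)
        (aW k • (ContinuousLinearMap.proj k : (Fin n → ℝ) →L[ℝ] ℝ)) x :=
      ((ContinuousLinearMap.proj k : (Fin n → ℝ) →L[ℝ] ℝ).hasFDerivAt).const_mul _
    rw [this.fderiv]
    simp [Pi.single_apply, eq_comm]
  have hp : ∀ k, HasFDerivAt (fun y : Fin n → ℝ => y k)
      (ContinuousLinearMap.proj k : (Fin n → ℝ) →L[ℝ] ℝ) x := fun k =>
    (ContinuousLinearMap.proj k : (Fin n → ℝ) →L[ℝ] ℝ).hasFDerivAt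
  have hQ : ∑ l, Z0 x l * pderiv l (fun y => Qvolt y i j) x
      = fderiv ℝ (fun y => Qvolt y i j) x (fun l => Z0 x l) := by
    unfold pderiv
    conv_rhs => rw [pi_eq_sum_univ' (fun l => Z0 x l)]
    rw [map_sum]
    refine Finset.sum_congr rfl fun l _ => ?_
    rw [map_smul, smul_eq_mul]
  have hD := (((((hp i).mul (hp j)).mul ((hp i).add (hp j))).mul_const
    (kdelta (i + 1) j - kdelta (j + 1) i)).add
    ((((hp i).mul (hp (i+1))).mul (hp (i+2))).mul_const (kdelta (i + 2) j))).sub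
    ((((hp i).mul (hp (i-1))).mul (hp (i-2))).mul_const (kdelta (i - 2) j))
  have hQ2 : fderiv ℝ (fun y => Qvolt y i j) x (fun l => Z0 x l) = _ :=
    congrArg (fun L => L (fun l => Z0 x l)) hD.fderiv
  have nz : ∀ k : ℕ, 0 < k → k < 5 → ((k : ℕ) : Fin n) ≠ 0 := by
    intro k h0 h5 h
    have := congrArg Fin.val h
    rw [Fin.val_natCast, Nat.mod_eq_of_lt (by omega)] at this
    simp at this
    omega
  have h1 : (1 : Fin n) ≠ 0 := by simpa using nz 1 (by norm_num) (by norm_num)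
  have e2 : (2 : Fin n) = 1 + 1 := by
    have : ((2:ℕ) : Fin n) = 1 + 1 := by push_cast; norm_num
    exact this
  have h2 : (1 + 1 : Fin n) ≠ 0 := by
    have := nz 2 (by norm_num) (by norm_num)
    intro h; apply this; rw [← h]; push_cast; norm_num
  have h3 : (1 + 1 + 1 : Fin n) ≠ 0 := by
    have := nz 3 (by norm_num) (by norm_num)
    intro h; apply this; rw [← h]; push_cast; norm_num
  have h4 : (1 + 1 + 1 + 1 : Fin n) ≠ 0 := by
    have := nz 4 (by norm_num) (by norm_num)
    intro h; apply this; rw [← h]; push_cast; norm_num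
  have key := comb_aux h1 h2 h3 h4 2 e2 x i j
  have hW : ∀ k, W0 x k = (if k = 0 then x 0 * x (0-1) else 0)
    + (if k = 0-1 then -(x 0 * x (0-1)) else 0)
    + (if k = 1 then x 0 * x 1 else 0)
    + (if k = 0-1 - 1 then -(x (0-1 - 1) * x (0-1)) else 0) := fun k => rfl
  rw [hZ x i, hZ x j, hW, hW]
  refine Eq.trans ?_ key
  unfold lieDerivBivector
  rw [Finset.sum_sub_distrib, Finset.sum_sub_distrib, hQ, hQ2]
  have k1 : ∀ u v : Fin n, (if u = v then (1:ℝ) else 0) = kdelta u v := fun _ _ => rfl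
  simp only [k1]
  simp only [hpZ, mul_ite, mul_zero, Finset.sum_ite_eq', Finset.mem_univ, if_true]
  simp only [sub_apply, add_apply,
    smul_apply, ContinuousLinearMap.proj_apply, smul_eq_mul, Pi.mul_apply,
    Pi.add_apply, hZ, Qvolt]
  have k2 : aW (i + 2) * kdelta (i + 2) j = aW j * kdelta (i + 2) j := by
    unfold kdelta
    split_ifs with h
    · rw [h]
    · simp
  have k3 : aW (i - 2) * kdelta (i - 2) j = aW j * kdelta (i - 2) j := by
    unfold kdelta
    split_ifs with h
    · rw [h]
    · simp
  linear_combination (x i * x (i + 1) * x (i + 2)) * k2 - (x i * x (i - 1) * x (i - 2)) * k3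

/-- The Lie derivative of the cubic Volterra Poisson tensor `Q` along
`Z₀ = c₁ ∂/∂c₁ + cₙ ∂/∂cₙ` is the decomposable bivector `Z₀ ∧ W₀`. -/
theorem stmt12 (n : ℕ) [NeZero n] (hn : 5 ≤ n) (x : Fin n → ℝ) (i j : Fin n) :
    lieDerivBivector Z0 (fun c => Qvolt c) x i j = Z0 x i * W0 x j - Z0 x j * W0 x i := by
  exact lie_aux n hn x i j
end
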